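/- Let X be a real Banach space, let A ⊆ X be a nonempty compact set, let f : X → X satisfy f(A) = A, and let P : X → X be a continuous linear map with P ∘ P = P whose range is a finite-dimensional subspace of dimension m ≥ 1. Suppose there exist constants L ≥ 0, δ ≥ 0 and α > 0 such that for all u, v ∈ A, ‖P(f(u) − f(v))‖ ≤ L‖u − v‖ and ‖(f(u) − f(v)) − P(f(u) − f(v))‖ ≤ δ‖u − v‖, and such that η := αL + 2δ < 1. Then the Hausdorff dimension of A satisfies dim_H(A) ≤ (ln m + m·ln(2 + 4/α)) / (−ln η). -/

import Mathlib

open MeasureTheory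

/-!
If `A` is covered by `M` balls of radius `r` centred in `A`, then `A ⊆ f(A)` is covered by the
images of these balls. On the image of one of them, the finite-dimensional component `P ∘ f` lies
in a ball of radius `L r`, which by comparing volumes has an `α L r`-net of at most
`N = (1 + 2/α)^m` points. Two points of the image whose components are `α L r`-close are at
distance at most `α L r + δ · 2r = η r`, so `A` is covered by `M N` balls of radius `η r`, again
centred in `A`. Iterating from a single ball of radius `R = diam A` gives `N^n` balls of radius
`η^n R`, hence finite `d`-dimensional Hausdorff measure as soon as `N η^d ≤ 1`.
-/

open Metric Set Filter Topology Module
open scoped NNReal ENNReal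

section CoveringNumber

variable {X Y Z ι : Type*} [PseudoEMetricSpace X] [PseudoEMetricSpace Y] {ε ε' : ℝ≥0}

theorem packingNumber_mono_set {A B : Set X} (h : A ⊆ B) :
    packingNumber ε A ≤ packingNumber ε B :=
  iSup₂_le fun _ hCA ↦ iSup_le fun hC ↦ hC.encard_le_packingNumber (hCA.trans h)

theorem coveringNumber_union_le (A B : Set X) :
    coveringNumber ε (A ∪ B) ≤ coveringNumber ε A + coveringNumber ε B := by
  simp only [coveringNumber, ENat.iInf_add, ENat.add_iInf, le_iInf_iff]
  intro D hDB hD C hCA hC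
  have hCD : IsCover ε (A ∪ B) (C ∪ D) := by
    rintro x (hx | hx)
    · exact hC.mono subset_union_left hx
    · exact hD.mono subset_union_right hx
  exact (hCD.coveringNumber_le_encard (union_subset_union hCA hDB)).trans (encard_union_le C D)

theorem coveringNumber_biUnion_le (s : Finset ι) (A : ι → Set X) :
    coveringNumber ε (⋃ i ∈ s, A i) ≤ ∑ i ∈ s, coveringNumber ε (A i) := by
  classical
  induction s using Finset.induction_on with
  | empty => simp
  | insert i s hi ih =>
    rw [Finset.set_biUnion_insert, Finset.sum_insert hi]
    exact (coveringNumber_union_le _ _).trans (by gcongr)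

theorem coveringNumber_image_le_of_edist_le {f : Z → X} {g : Z → Y} {S : Set Z}
    (h : ∀ u ∈ S, ∀ v ∈ S, edist (g u) (g v) ≤ ε → edist (f u) (f v) ≤ ε') :
    coveringNumber ε' (f '' S) ≤ coveringNumber ε (g '' S) := by
  refine le_iInf₂ fun C hCS ↦ le_iInf fun hC ↦ ?_
  obtain ⟨T, hTS, hgT, rfl⟩ := SurjOn.exists_subset_injOn_image_eq (f := g) (s := S) hCS
  have hfT : IsCover ε' (f '' S) (f '' T) := by
    rintro _ ⟨u, hu, rfl⟩
    obtain ⟨_, ⟨v, hv, rfl⟩, huv⟩ := hC (mem_image_of_mem g hu)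
    exact ⟨f v, mem_image_of_mem f hv, h u hu v (hTS hv) huv⟩
  calc coveringNumber ε' (f '' S) ≤ (f '' T).encard :=
        hfT.coveringNumber_le_encard (image_mono hTS)
    _ ≤ T.encard := encard_image_le f T
    _ = (g '' T).encard := hgT.encard_image.symm

theorem coveringNumber_mul_le_of_forall_inter_image {A : Set X} {f : X → X} {η r : ℝ≥0}
    {M N : ℕ} (hfA : A ⊆ f '' A) (hA : coveringNumber r A ≤ M)
    (hN : ∀ u ∈ A, coveringNumber (η * r) (A ∩ f '' (A ∩ closedEBall u r)) ≤ N) :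
    coveringNumber (η * r) A ≤ (M * N : ℕ) := by
  obtain ⟨C, hCA, hCfin, hC, hCcard⟩ :=
    exists_set_encard_eq_coveringNumber (ne_top_of_le_ne_top (ENat.natCast_ne_top M) hA)
  lift C to Finset X using hCfin
  rw [← hCcard, encard_coe_eq_coe_finsetCard] at hA
  have hA_eq : A = ⋃ u ∈ C, A ∩ f '' (A ∩ closedEBall u r) := by
    refine Subset.antisymm (fun w hw ↦ ?_) (iUnion₂_subset fun _ _ ↦ inter_subset_left)
    obtain ⟨v, hv, rfl⟩ := hfA hw
    obtain ⟨u, hu, hvu⟩ := hC hv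
    exact mem_biUnion hu ⟨hw, v, ⟨hv, hvu⟩, rfl⟩
  calc coveringNumber (η * r) A
      = coveringNumber (η * r) (⋃ u ∈ C, A ∩ f '' (A ∩ closedEBall u r)) := by rw [← hA_eq]
    _ ≤ ∑ u ∈ C, coveringNumber (η * r) (A ∩ f '' (A ∩ closedEBall u r)) :=
        coveringNumber_biUnion_le C _
    _ ≤ C.card • (N : ℕ∞) := Finset.sum_le_card_nsmul C _ _ fun u hu ↦ hN u (hCA hu)
    _ ≤ (M * N : ℕ) := by
        rw [nsmul_eq_mul, Nat.cast_mul]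
        gcongr

theorem coveringNumber_pow_mul_le {A : Set X} {f : X → X} {η R : ℝ≥0} {N : ℕ}
    (hAR : ediam A ≤ R) (hfA : A ⊆ f '' A)
    (hN : ∀ r : ℝ≥0, ∀ u ∈ A,
      coveringNumber (η * r) (A ∩ f '' (A ∩ closedEBall u r)) ≤ N) (n : ℕ) :
    coveringNumber (η ^ n * R) A ≤ (N ^ n : ℕ) := by
  induction n with
  | zero => simpa using coveringNumber_le_one_of_ediam_le hAR
  | succ n ih =>
    rw [pow_succ', mul_assoc, pow_succ]
    exact coveringNumber_mul_le_of_forall_inter_image hfA ih (hN _)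

end CoveringNumber

section HausdorffDimension

variable {X : Type*} [EMetricSpace X] {A : Set X}

theorem hausdorffMeasure_le_liminf_coveringNumber [MeasurableSpace X] [BorelSpace X]
    {β : Type*} {l : Filter β} {ε : β → ℝ≥0} {d : ℝ} (hd : 0 ≤ d) (hε : Tendsto ε l (𝓝 0))
    (hA : ∀ n, coveringNumber (ε n) A ≠ ⊤) :
    Measure.hausdorffMeasure d A ≤
      liminf (fun n ↦ (coveringNumber (ε n) A : ℝ≥0∞) * (2 * ε n) ^ d) l := by
  choose C _ hCfin hC hCcard using fun n ↦ exists_set_encard_eq_coveringNumber (hA n)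
  have : ∀ n, Fintype (C n) := fun n ↦ (hCfin n).fintype
  have hε2 : Tendsto (fun n ↦ 2 * (ε n : ℝ≥0∞)) l (𝓝 0) := by
    simpa using ENNReal.Tendsto.const_mul (ENNReal.tendsto_coe.2 hε) (.inr ENNReal.ofNat_ne_top)
  refine (Measure.hausdorffMeasure_le_liminf_sum d A _ hε2
    (fun n (x : C n) ↦ closedEBall (x : X) (ε n))
    (.of_forall fun n x ↦ ediam_closedEBall_le) (.of_forall fun n ↦ ?_)).trans
      (liminf_le_liminf (.of_forall fun n ↦ ?_))
  · simpa only [iUnion_coe_set] using isCover_iff_subset_iUnion_closedEBall.1 (hC n)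
  · calc ∑ x : C n, ediam (closedEBall (x : X) (ε n)) ^ d
        ≤ ∑ _x : C n, (2 * (ε n : ℝ≥0∞)) ^ d := by
          gcongr
          exact ediam_closedEBall_le
      _ = (coveringNumber (ε n) A : ℝ≥0∞) * (2 * ε n) ^ d := by
          rw [Finset.sum_const, Finset.card_univ, nsmul_eq_mul, ← hCcard n,
            ← coe_fintypeCard, ENat.toENNReal_coe]

theorem hausdorffMeasure_le_of_coveringNumber_le_pow [MeasurableSpace X] [BorelSpace X]
    {η R : ℝ≥0} {N : ℕ} {d : ℝ} (hd : 0 ≤ d) (hη : η < 1) (hNη : N * η ^ d ≤ 1)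
    (hA : ∀ n : ℕ, coveringNumber (η ^ n * R) A ≤ (N ^ n : ℕ)) :
    Measure.hausdorffMeasure d A ≤ (2 * R) ^ d := by
  have hε : Tendsto (fun n : ℕ ↦ η ^ n * R) atTop (𝓝 0) := by
    simpa using (NNReal.tendsto_pow_atTop_nhds_zero_of_lt_one hη).mul_const R
  refine (hausdorffMeasure_le_liminf_coveringNumber hd hε fun n ↦
    ne_top_of_le_ne_top (ENat.natCast_ne_top _) (hA n)).trans
      (liminf_le_of_frequently_le' (.of_forall fun n ↦ ?_))
  have hscale : (N : ℝ≥0) ^ n * (2 * (η ^ n * R)) ^ d = (N * η ^ d) ^ n * (2 * R) ^ d := by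
    have hpow : (η ^ n) ^ d = (η ^ d) ^ n := by
      rw [← NNReal.rpow_natCast_mul, ← NNReal.rpow_mul_natCast, mul_comm]
    rw [mul_left_comm, NNReal.mul_rpow, hpow, mul_pow, mul_assoc]
  calc (coveringNumber (η ^ n * R) A : ℝ≥0∞) * (2 * (η ^ n * R : ℝ≥0)) ^ d
      ≤ (N ^ n : ℕ) * (2 * (η ^ n * R : ℝ≥0)) ^ d := by
        gcongr
        exact_mod_cast hA n
    _ = ((N * η ^ d) ^ n * (2 * R) ^ d : ℝ≥0) := by
        rw [← hscale]
        push_cast [ENNReal.coe_rpow_of_nonneg _ hd]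
        rfl
    _ ≤ (1 * (2 * R) ^ d : ℝ≥0) := by
        gcongr
        exact pow_le_one₀ zero_le hNη
    _ = (2 * R) ^ d := by
        rw [one_mul, ENNReal.coe_rpow_of_nonneg _ hd, ENNReal.coe_mul, ENNReal.coe_ofNat]

theorem natCast_mul_rpow_log_div_neg_log {N : ℕ} {η : ℝ≥0} (hN : N ≠ 0) (hη0 : η ≠ 0)
    (hη1 : η < 1) : N * η ^ (Real.log N / -Real.log η) = 1 := by
  have hlogb : Real.log N / -Real.log η = Real.logb η (N : ℝ)⁻¹ := by
    rw [Real.logb_inv, Real.logb, div_neg]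
  apply NNReal.coe_injective
  push_cast
  rw [hlogb, Real.rpow_logb (by positivity) (by exact_mod_cast hη1.ne) (by positivity),
    mul_inv_cancel₀ (by positivity)]

theorem dimH_le_of_coveringNumber_le_pow {η R : ℝ≥0} {N : ℕ} (hη : η < 1)
    (hA : ∀ n : ℕ, coveringNumber (η ^ n * R) A ≤ (N ^ n : ℕ)) :
    dimH A ≤ ENNReal.ofReal (Real.log N / -Real.log η) := by
  rcases A.eq_empty_or_nonempty with rfl | hAne
  · simp
  rcases eq_or_ne η 0 with rfl | hη0
  -- The claimed bound is `0` here since `Real.log 0 = 0`; it holds because `A` is finite.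
  · have hAfin : A.Finite := by
      refine encard_ne_top_iff.1 (ne_top_of_le_ne_top (ENat.natCast_ne_top _) (?_ : _ ≤ (N : ℕ∞)))
      simpa using hA 1
    simp [hAfin.dimH_zero]
  have hN : N ≠ 0 := by
    rintro rfl
    simpa [hAne.ne_empty] using hA 1
  have hd : 0 ≤ Real.log N / -Real.log η :=
    div_nonneg (Real.log_natCast_nonneg N)
      (neg_nonneg.2 (Real.log_nonpos η.coe_nonneg (by exact_mod_cast hη.le)))
  borelize X
  refine dimH_le_of_hausdorffMeasure_ne_top (ne_top_of_le_ne_top ?_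
    (hausdorffMeasure_le_of_coveringNumber_le_pow (Real.toNNReal _).coe_nonneg hη ?_ hA))
  · exact ENNReal.rpow_ne_top_of_nonneg (NNReal.coe_nonneg _) (by finiteness)
  · rw [Real.coe_toNNReal _ hd, natCast_mul_rpow_log_div_neg_log hN hη0 hη]

end HausdorffDimension

section FiniteDimensional

variable {E : Type*} [NormedAddCommGroup E] [NormedSpace ℝ E] [FiniteDimensional ℝ E]

theorem card_mul_pow_le_of_isSeparated {s : Finset E} {x : E} {ε r : ℝ≥0}
    (hs : IsSeparated ε (s : Set E)) (hsr : (s : Set E) ⊆ closedBall x r) :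
    (s.card : ℝ) * (ε / 2 : ℝ) ^ finrank ℝ E ≤ (r + ε / 2 : ℝ) ^ finrank ℝ E := by
  borelize E
  let μ : Measure E := Measure.addHaar
  have hdisj : (s : Set E).PairwiseDisjoint fun c ↦ closedBall c (ε / 2 : ℝ) := by
    intro c hc d hd hcd
    have hcd' : (ε : ℝ) < dist c d := by
      simpa only [edist_nndist, ENNReal.coe_lt_coe, ← NNReal.coe_lt_coe] using! hs hc hd hcd
    exact closedBall_disjoint_closedBall (by linarith)
  have hsub : ⋃ c ∈ s, closedBall c (ε / 2 : ℝ) ⊆ closedBall x (r + ε / 2) :=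
    iUnion₂_subset fun c hc ↦ closedBall_subset_closedBall' (by
      linarith [mem_closedBall.1 (hsr hc)])
  have hvol : (s.card : ℝ) * (ε / 2 : ℝ) ^ finrank ℝ E * μ.real (ball 0 1) ≤
      (r + ε / 2 : ℝ) ^ finrank ℝ E * μ.real (ball 0 1) :=
    calc (s.card : ℝ) * (ε / 2 : ℝ) ^ finrank ℝ E * μ.real (ball 0 1)
        = ∑ c ∈ s, μ.real (closedBall c (ε / 2 : ℝ)) := by
          simp [μ.addHaar_real_closedBall _ (show (0 : ℝ) ≤ ε / 2 by positivity), mul_assoc]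
      _ = μ.real (⋃ c ∈ s, closedBall c (ε / 2 : ℝ)) :=
          (measureReal_biUnion_finset hdisj (fun _ _ ↦ measurableSet_closedBall)
            fun _ _ ↦ measure_closedBall_lt_top.ne).symm
      _ ≤ μ.real (closedBall x (r + ε / 2)) :=
          measureReal_mono hsub measure_closedBall_lt_top.ne
      _ = (r + ε / 2 : ℝ) ^ finrank ℝ E * μ.real (ball 0 1) :=
          μ.addHaar_real_closedBall x (by positivity)
  have hunit : 0 < μ.real (ball (0 : E) 1) :=
    ENNReal.toReal_pos (measure_ball_pos μ 0 one_pos).ne' measure_ball_lt_top.ne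
  exact le_of_mul_le_mul_right hvol hunit

theorem packingNumber_closedBall_le {ε : ℝ≥0} (hε : ε ≠ 0) (x : E) (r : ℝ≥0) :
    packingNumber ε (closedBall x r) ≤ ⌊(1 + 2 * r / ε : ℝ) ^ finrank ℝ E⌋₊ := by
  refine iSup₂_le fun C hCx ↦ iSup_le fun hC ↦ ?_
  by_contra! hlt
  obtain ⟨T, hTC, hTcard⟩ := exists_subset_encard_eq (Order.add_one_le_of_lt hlt)
  lift T to Finset E using finite_of_encard_eq_coe hTcard
  have hT : (T.card : ℝ) ≤ (1 + 2 * r / ε : ℝ) ^ finrank ℝ E := by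
    have hvol := card_mul_pow_le_of_isSeparated (hC.subset hTC) (hTC.trans hCx)
    have hratio : (r + ε / 2 : ℝ) = (1 + 2 * r / ε) * (ε / 2) := by
      field_simp
      ring
    rw [hratio, mul_pow] at hvol
    exact le_of_mul_le_mul_right hvol (by positivity)
  have hTcard' : T.card = ⌊(1 + 2 * r / ε : ℝ) ^ finrank ℝ E⌋₊ + 1 := by
    exact_mod_cast (encard_coe_eq_coe_finsetCard T).symm.trans hTcard
  exact (Nat.le_floor hT).not_gt (by lia)

theorem packingNumber_mul_closedBall_le {α : ℝ≥0} (hα : α ≠ 0) (x : E) (r : ℝ≥0) :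
    packingNumber (α * r) (closedBall x r) ≤ ⌊(1 + 2 / α : ℝ) ^ finrank ℝ E⌋₊ := by
  rcases eq_or_ne r 0 with rfl | hr
  · have hone : 1 ≤ ⌊(1 + 2 / α : ℝ) ^ finrank ℝ E⌋₊ :=
      Nat.floor_pos.2 (one_le_pow₀ (le_add_of_nonneg_right (by positivity)))
    simpa using hone
  · have hratio : (2 * r / (α * r : ℝ≥0) : ℝ) = 2 / α := by
      push_cast
      field_simp
    simpa only [hratio] using packingNumber_closedBall_le (mul_ne_zero hα hr) x r

section Squeezing

variable {X : Type*} {A : Set X} {f : X → X} {g : X → E} {L δ α : ℝ≥0}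

theorem coveringNumber_inter_image_le [PseudoEMetricSpace X] (hα : α ≠ 0)
    (hg : LipschitzOnWith L g A)
    (hf : ∀ u ∈ A, ∀ v ∈ A, edist (f u) (f v) ≤ edist (g u) (g v) + δ * edist u v)
    (r : ℝ≥0) {u : X} (hu : u ∈ A) :
    coveringNumber ((α * L + 2 * δ) * r) (A ∩ f '' (A ∩ closedEBall u r)) ≤
      ⌊(1 + 2 / α : ℝ) ^ finrank ℝ E⌋₊ := by
  let S := A ∩ closedEBall u r ∩ f ⁻¹' A
  have hgS : g '' S ⊆ closedBall (g u) (L * r : ℝ≥0) := by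
    rintro _ ⟨v, ⟨⟨hv, hvr⟩, -⟩, rfl⟩
    rw [← closedEBall_coe, mem_closedEBall, ENNReal.coe_mul]
    exact hg.edist_le_mul_of_le hv hu hvr
  have hfg : ∀ v ∈ S, ∀ w ∈ S, edist (g v) (g w) ≤ (α * (L * r) : ℝ≥0) →
      edist (f v) (f w) ≤ ((α * L + 2 * δ) * r : ℝ≥0) := by
    rintro v ⟨⟨hv, hvr⟩, -⟩ w ⟨⟨hw, hwr⟩, -⟩ hvw
    have hvw2 : edist v w ≤ 2 * r := by
      rw [two_mul]
      exact (edist_triangle_right v w u).trans (add_le_add hvr hwr)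
    calc edist (f v) (f w) ≤ edist (g v) (g w) + δ * edist v w := hf v hv w hw
      _ ≤ (α * (L * r) : ℝ≥0) + δ * (2 * r) := by gcongr
      _ = ((α * L + 2 * δ) * r : ℝ≥0) := by
          push_cast
          ring
  calc coveringNumber ((α * L + 2 * δ) * r) (A ∩ f '' (A ∩ closedEBall u r))
      = coveringNumber ((α * L + 2 * δ) * r) (f '' S) := by
        rw [image_inter_preimage, inter_comm]
    _ ≤ coveringNumber (α * (L * r)) (g '' S) := coveringNumber_image_le_of_edist_le hfg
    _ ≤ packingNumber (α * (L * r)) (g '' S) := coveringNumber_le_packingNumber _ _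
    _ ≤ packingNumber (α * (L * r)) (closedBall (g u) (L * r : ℝ≥0)) :=
        packingNumber_mono_set hgS
    _ ≤ ⌊(1 + 2 / α : ℝ) ^ finrank ℝ E⌋₊ := packingNumber_mul_closedBall_le hα _ _

theorem dimH_le_of_lipschitzOnWith_of_edist_le [EMetricSpace X] (hA : ediam A ≠ ⊤)
    (hfA : A ⊆ f '' A) (hα : α ≠ 0) (hg : LipschitzOnWith L g A)
    (hf : ∀ u ∈ A, ∀ v ∈ A, edist (f u) (f v) ≤ edist (g u) (g v) + δ * edist u v)
    (hη : α * L + 2 * δ < 1) :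
    dimH A ≤ ENNReal.ofReal
      (finrank ℝ E * Real.log (1 + 2 / α) / -Real.log (α * L + 2 * δ)) := by
  have hcov := coveringNumber_pow_mul_le (ENNReal.coe_toNNReal hA).ge hfA fun r u hu ↦
    coveringNumber_inter_image_le hα hg hf r hu
  refine (dimH_le_of_coveringNumber_le_pow hη hcov).trans (ENNReal.ofReal_le_ofReal ?_)
  have hone : (1 : ℝ) ≤ (1 + 2 / α) ^ finrank ℝ E :=
    one_le_pow₀ (le_add_of_nonneg_right (by positivity))
  have hlog : 0 ≤ -Real.log (α * L + 2 * δ) :=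
    neg_nonneg.2 (Real.log_nonpos (by positivity) (by exact_mod_cast hη.le))
  rw [← Real.log_pow]
  push_cast
  gcongr
  · exact_mod_cast Nat.floor_pos.2 hone
  · exact Nat.floor_le (zero_le_one.trans hone)

end Squeezing

end FiniteDimensional

theorem natCast_mul_log_le_log_add_mul_log (m : ℕ) {α : ℝ} (hα : 0 < α) :
    m * Real.log (1 + 2 / α) ≤ Real.log m + m * Real.log (2 + 4 / α) := by
  have hle : 1 + 2 / α ≤ 2 + 4 / α := by
    have : 2 / α ≤ 4 / α := by gcongr; norm_num
    linarith
  calc m * Real.log (1 + 2 / α) ≤ m * Real.log (2 + 4 / α) := by gcongr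
    _ ≤ Real.log m + m * Real.log (2 + 4 / α) :=
        le_add_of_nonneg_left (Real.log_natCast_nonneg m)

theorem stmt_9_general {X : Type*} [NormedAddCommGroup X] [NormedSpace ℝ X] {A : Set X}
    (hA : Bornology.IsBounded A) {f : X → X} (hfA : A ⊆ f '' A) (P : X →ₗ[ℝ] X)
    [FiniteDimensional ℝ P.range] {L δ α : ℝ} (hL : 0 ≤ L) (hδ : 0 ≤ δ) (hα : 0 < α)
    (hPf : ∀ u ∈ A, ∀ v ∈ A, ‖P (f u - f v)‖ ≤ L * ‖u - v‖)
    (hQf : ∀ u ∈ A, ∀ v ∈ A, ‖(f u - f v) - P (f u - f v)‖ ≤ δ * ‖u - v‖)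
    (hη : α * L + 2 * δ < 1) :
    dimH A ≤ ENNReal.ofReal
      (finrank ℝ P.range * Real.log (1 + 2 / α) / -Real.log (α * L + 2 * δ)) := by
  lift L to ℝ≥0 using hL
  lift δ to ℝ≥0 using hδ
  lift α to ℝ≥0 using hα.le
  have hdist (u v : X) :
      dist (P.rangeRestrict (f u)) (P.rangeRestrict (f v)) = ‖P (f u - f v)‖ := by
    rw [dist_eq_norm, ← map_sub]
    rfl
  refine dimH_le_of_lipschitzOnWith_of_edist_le (g := fun u ↦ P.rangeRestrict (f u)) (L := L)
    hA.ediam_ne_top hfA (by exact_mod_cast hα.ne') (.of_dist_le_mul fun u hu v hv ↦ ?_)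
    (fun u hu v hv ↦ ?_) (by exact_mod_cast hη)
  · rw [hdist, dist_eq_norm]
    exact hPf u hu v hv
  · have hdecomp : dist (f u) (f v) ≤
        dist (P.rangeRestrict (f u)) (P.rangeRestrict (f v)) + δ * dist u v := by
      rw [hdist, dist_eq_norm, dist_eq_norm]
      exact (norm_le_norm_add_norm_sub' _ _).trans (by gcongr; exact hQf u hu v hv)
    simp only [edist_nndist]
    exact_mod_cast hdecomp

/-- If a compact invariant set `A = f(A)` admits a finite-rank projection `P` of rank
`m ≥ 1` with the squeezing estimates `‖P(f u − f v)‖ ≤ L‖u−v‖`,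
`‖(I−P)(f u − f v)‖ ≤ δ‖u−v‖` on `A` and `η := αL + 2δ < 1`, then
`dim_H A ≤ (ln m + m ln(2+4/α)) / (−ln η)`. -/
theorem stmt_9 {X : Type*} [NormedAddCommGroup X] [NormedSpace ℝ X] [CompleteSpace X]
    [MeasurableSpace X] [BorelSpace X]
    (A : Set X) (hA : A.Nonempty) (hAc : IsCompact A)
    (f : X → X) (hfA : f '' A = A)
    (P : X →L[ℝ] X) (hproj : ∀ z : X, P (P z) = P z) (m : ℕ)
    (hrank : Module.finrank ℝ (LinearMap.range (P : X →ₗ[ℝ] X)) = m) (hm : 1 ≤ m)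
    (L δ α : ℝ) (hL : 0 ≤ L) (hδ : 0 ≤ δ) (hα : 0 < α)
    (hPf : ∀ u ∈ A, ∀ v ∈ A, ‖P (f u - f v)‖ ≤ L * ‖u - v‖)
    (hQf : ∀ u ∈ A, ∀ v ∈ A, ‖(f u - f v) - P (f u - f v)‖ ≤ δ * ‖u - v‖)
    (hη : α * L + 2 * δ < 1) :
    dimH A ≤ ENNReal.ofReal
      ((Real.log m + m * Real.log (2 + 4 / α)) / (-Real.log (α * L + 2 * δ))) := by
  have : FiniteDimensional ℝ P.range := finite_of_finrank_pos (hrank ▸ hm)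
  refine (stmt_9_general hAc.isBounded hfA.ge (P : X →ₗ[ℝ] X) hL hδ hα hPf hQf hη).trans
    (ENNReal.ofReal_le_ofReal ?_)
  rw [hrank]
  have hlog : 0 ≤ -Real.log (α * L + 2 * δ) :=
    neg_nonneg.2 (Real.log_nonpos (by positivity) hη.le)
  exact div_le_div_of_nonneg_right (natCast_mul_log_le_log_add_mul_log m hα) hlog
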